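/- arXiv:1201.0566 — 8 statements merged into one kernel-verified Lean document; each statement's English description precedes it below -/
import Mathlib

section
/- For any optimal solution (x*, a*, b*) of the problem (OPT2), there exist vectors m^I, m^D ∈ ℝ^N with |m^I_i| ≤ U^I and |m^D_i| ≤ U^D for all i, such that a*_i = m^I_i x*_i and b*_i = m^D_i x*_i for all i, and the triple (x*, m^I, m^D) is an optimal solution of the problem (OPT1); in particular x* attains the optimal value of (OPT1). -/
open Finset

/-- The ℓ2 (Euclidean) norm of a finitely-indexed real vector. -/
noncomputable def l2norm {ι : Type*} [Fintype ι] (v : ι → ℝ) : ℝ :=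
  Real.sqrt (∑ i, v i ^ 2)

/-- Feasibility for problem (OPT2). -/
def OPT2Feasible {n N : ℕ} (ΦI ΦD : Matrix (Fin n) (Fin N) ℝ) (yI yD : Fin n → ℝ)
    (εI εD UI UD : ℝ) (x a b : Fin N → ℝ) : Prop :=
  (∀ i, 0 ≤ x i ∧ x i ≤ 1) ∧
  l2norm (yI - ΦI.mulVec a) ≤ εI ∧
  l2norm (yD - ΦD.mulVec b) ≤ εD ∧
  (∀ i, |a i| ≤ UI * x i) ∧
  (∀ i, |b i| ≤ UD * x i)

/-- Optimality for problem (OPT2). -/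
def OPT2Optimal {n N : ℕ} (ΦI ΦD : Matrix (Fin n) (Fin N) ℝ) (yI yD : Fin n → ℝ)
    (εI εD UI UD : ℝ) (x a b : Fin N → ℝ) : Prop :=
  OPT2Feasible ΦI ΦD yI yD εI εD UI UD x a b ∧
  ∀ x' a' b' : Fin N → ℝ, OPT2Feasible ΦI ΦD yI yD εI εD UI UD x' a' b' →
    ∑ i, x i ≤ ∑ i, x' i

/-- Feasibility for problem (OPT1). -/
def OPT1Feasible {n N : ℕ} (ΦI ΦD : Matrix (Fin n) (Fin N) ℝ) (yI yD : Fin n → ℝ)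
    (εI εD UI UD : ℝ) (x mI mD : Fin N → ℝ) : Prop :=
  (∀ i, 0 ≤ x i ∧ x i ≤ 1) ∧
  l2norm (yI - ΦI.mulVec (fun i => mI i * x i)) ≤ εI ∧
  l2norm (yD - ΦD.mulVec (fun i => mD i * x i)) ≤ εD ∧
  (∀ i, |mI i| ≤ UI) ∧
  (∀ i, |mD i| ≤ UD)

/-- Optimality for problem (OPT1). -/
def OPT1Optimal {n N : ℕ} (ΦI ΦD : Matrix (Fin n) (Fin N) ℝ) (yI yD : Fin n → ℝ)
    (εI εD UI UD : ℝ) (x mI mD : Fin N → ℝ) : Prop :=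
  OPT1Feasible ΦI ΦD yI yD εI εD UI UD x mI mD ∧
  ∀ x' mI' mD' : Fin N → ℝ, OPT1Feasible ΦI ΦD yI yD εI εD UI UD x' mI' mD' →
    ∑ i, x i ≤ ∑ i, x' i

/-- For any optimal solution `(x*, a*, b*)` of (OPT2), there exist magnitude vectors
`mI, mD` with `|mI i| ≤ UI`, `|mD i| ≤ UD`, `a* i = mI i * x* i` and `b* i = mD i * x* i`,
such that `(x*, mI, mD)` is an optimal solution of (OPT1). -/
theorem opt2_optimal_gives_opt1_optimal {n N : ℕ}
    (ΦI ΦD : Matrix (Fin n) (Fin N) ℝ) (yI yD : Fin n → ℝ)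
    (εI εD UI UD : ℝ) (hεI : 0 ≤ εI) (hεD : 0 ≤ εD) (hUI : 0 < UI) (hUD : 0 < UD)
    (x a b : Fin N → ℝ)
    (hopt : OPT2Optimal ΦI ΦD yI yD εI εD UI UD x a b) :
    ∃ mI mD : Fin N → ℝ,
      (∀ i, |mI i| ≤ UI) ∧ (∀ i, |mD i| ≤ UD) ∧
      (∀ i, a i = mI i * x i) ∧ (∀ i, b i = mD i * x i) ∧
      OPT1Optimal ΦI ΦD yI yD εI εD UI UD x mI mD := by
  obtain ⟨⟨hx, h1, h2, ha, hb⟩, hmin⟩ := hopt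
  have key : ∀ (U : ℝ), 0 < U → ∀ c : Fin N → ℝ, (∀ i, |c i| ≤ U * x i) →
      (∀ i, |c i / x i| ≤ U) ∧ (∀ i, c i = c i / x i * x i) := by
    intro U hU c hc
    refine ⟨fun i => ?_, fun i => ?_⟩
    · rw [abs_div, abs_of_nonneg (hx i).1]
      exact div_le_of_le_mul₀ (hx i).1 hU.le (hc i)
    · by_cases h0 : x i = 0
      · have h := hc i
        rw [h0, mul_zero] at h
        rw [h0, mul_zero]
        exact abs_nonpos_iff.mp h
      · exact (div_mul_cancel₀ _ h0).symm
  obtain ⟨hmI, haI⟩ := key UI hUI a ha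
  obtain ⟨hmD, hbD⟩ := key UD hUD b hb
  refine ⟨fun i => a i / x i, fun i => b i / x i, hmI, hmD, haI, hbD,
    ⟨hx, ?_, ?_, hmI, hmD⟩, ?_⟩
  · have h : (fun i => a i / x i * x i) = a := funext fun i => (haI i).symm
    simpa only [h] using h1
  · have h : (fun i => b i / x i * x i) = b := funext fun i => (hbD i).symm
    simpa only [h] using h2
  · rintro x' mI' mD' ⟨hx', h1', h2', hI', hD'⟩
    refine hmin x' (fun i => mI' i * x' i) (fun i => mD' i * x' i)
      ⟨hx', h1', h2', fun i => ?_, fun i => ?_⟩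
    · rw [abs_mul, abs_of_nonneg (hx' i).1]
      exact mul_le_mul_of_nonneg_right (hI' i) (hx' i).1
    · rw [abs_mul, abs_of_nonneg (hx' i).1]
      exact mul_le_mul_of_nonneg_right (hD' i) (hx' i).1
end

section
/- For any optimal solution (x*, m^I, m^D) of the problem (OPT1), the triple (x*, a*, b*) defined by a*_i = m^I_i x*_i and b*_i = m^D_i x*_i for all i is an optimal solution of the problem (OPT2); in particular the optimal values of (OPT1) and (OPT2) coincide. -/
open Finset

theorem aux_div_mul {U x a : ℝ} (h : |a| ≤ U * x) : a / x * x = a := by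
  by_cases hx : x = 0
  · subst hx
    have : a = 0 := by simpa using h
    simp [this]
  · field_simp

theorem aux_abs_div {U x a : ℝ} (hU : 0 < U) (hx : 0 ≤ x) (h : |a| ≤ U * x) :
    |a / x| ≤ U := by
  rw [abs_div, abs_of_nonneg hx]
  exact div_le_of_le_mul₀ hx hU.le h

theorem aux_abs_mul {U x m : ℝ} (hx : 0 ≤ x) (h : |m| ≤ U) : |m * x| ≤ U * x := by
  rw [abs_mul, abs_of_nonneg hx]
  exact mul_le_mul_of_nonneg_right h hx

/-- For any optimal solution `(x*, mI, mD)` of (OPT1), the triple `(x*, a*, b*)` defined by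
`a* i = mI i * x* i` and `b* i = mD i * x* i` is an optimal solution of (OPT2); in particular
the optimal values of (OPT1) and (OPT2) coincide. -/
theorem opt1_optimal_gives_opt2_optimal {n N : ℕ}
    (ΦI ΦD : Matrix (Fin n) (Fin N) ℝ) (yI yD : Fin n → ℝ)
    (εI εD UI UD : ℝ) (hεI : 0 ≤ εI) (hεD : 0 ≤ εD) (hUI : 0 < UI) (hUD : 0 < UD)
    (x mI mD : Fin N → ℝ)
    (hopt : OPT1Optimal ΦI ΦD yI yD εI εD UI UD x mI mD) :
    OPT2Optimal ΦI ΦD yI yD εI εD UI UD x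
      (fun i => mI i * x i) (fun i => mD i * x i) := by
  obtain ⟨⟨hx, hI, hD, hmI, hmD⟩, hmin⟩ := hopt
  refine ⟨⟨hx, hI, hD, fun i => aux_abs_mul (hx i).1 (hmI i),
    fun i => aux_abs_mul (hx i).1 (hmD i)⟩, ?_⟩
  rintro x' a b ⟨hx', ha, hb, hUa, hUb⟩
  refine hmin x' (fun i => a i / x' i) (fun i => b i / x' i) ⟨hx', ?_, ?_,
    fun i => aux_abs_div hUI (hx' i).1 (hUa i), fun i => aux_abs_div hUD (hx' i).1 (hUb i)⟩
  · have h : (fun i => a i / x' i * x' i) = a := funext fun i => aux_div_mul (hUa i)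
    simpa only [h] using ha
  · have h : (fun i => b i / x' i * x' i) = b := funext fun i => aux_div_mul (hUb i)
    simpa only [h] using hb
end

section
/- Let A ∈ ℝ^{m×n} be a matrix whose columns φ_1, …, φ_n all have unit ℓ2 norm, and let μ = max_{i≠j} |⟨φ_i, φ_j⟩| be its coherence. Then for every index set T ⊆ {1,…,n} with |T| ≤ S and every coefficient vector s indexed by T, (1 − μ(S−1)) ‖s‖₂² ≤ ‖Σ_{j∈T} s_j φ_j‖₂² ≤ (1 + μ(S−1)) ‖s‖₂²; that is, δ_S = μ(S−1) satisfies the S-restricted isometry inequality for A. -/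
open Finset

/-- Let `A` be a real `m × n` matrix whose columns all have unit ℓ2 norm, and let `μ` be its
coherence, i.e. the maximum of `|⟨φ_i, φ_j⟩|` over pairs of distinct columns. Then for every
index set `T` with `|T| ≤ S` and every coefficient vector `s` (supported on `T`),
`(1 − μ(S−1)) ‖s‖₂² ≤ ‖Σ_{j∈T} s_j φ_j‖₂² ≤ (1 + μ(S−1)) ‖s‖₂²`; that is, `δ_S = μ(S−1)`
satisfies the `S`-restricted isometry inequality for `A`. -/
theorem coherence_satisfies_RIP {m n : ℕ} (A : Matrix (Fin m) (Fin n) ℝ)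
    (hunit : ∀ j : Fin n, ∑ i, (A i j) ^ 2 = 1)
    (μ : ℝ)
    (hμ : IsGreatest {r : ℝ | ∃ i j : Fin n, i ≠ j ∧ r = |∑ k, A k i * A k j|} μ)
    (S : ℕ) (T : Finset (Fin n)) (hT : T.card ≤ S) (s : Fin n → ℝ) :
    (1 - μ * ((S : ℝ) - 1)) * ∑ j ∈ T, s j ^ 2 ≤ ∑ i, (∑ j ∈ T, s j * A i j) ^ 2 ∧
    ∑ i, (∑ j ∈ T, s j * A i j) ^ 2 ≤ (1 + μ * ((S : ℝ) - 1)) * ∑ j ∈ T, s j ^ 2 := by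
  have hμ0 : 0 ≤ μ := by
    obtain ⟨i, j, _, h⟩ := hμ.1
    rw [h]; exact abs_nonneg _
  have hF : ∑ i, (∑ j ∈ T, s j * A i j) ^ 2
      = ∑ a ∈ T, ∑ b ∈ T, s a * s b * ∑ k, A k a * A k b := by
    simp_rw [sq, Finset.sum_mul_sum, Finset.mul_sum]
    rw [Finset.sum_comm]
    refine Finset.sum_congr rfl fun a _ => ?_
    rw [Finset.sum_comm]
    refine Finset.sum_congr rfl fun b _ => Finset.sum_congr rfl fun k _ => ?_
    ring
  have hdiag : ∀ f : Fin n → ℝ,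
      ∑ a ∈ T, ∑ b ∈ T, (if a = b then f a else 0) = ∑ a ∈ T, f a := by
    intro f
    refine Finset.sum_congr rfl fun a ha => ?_
    rw [Finset.sum_ite_eq, if_pos ha]
  have hsum : ∑ a ∈ T, ∑ b ∈ T, (μ * ((s a ^ 2 + s b ^ 2) / 2))
      = μ * (T.card * ∑ a ∈ T, s a ^ 2) := by
    simp_rw [← Finset.mul_sum, ← Finset.sum_div, Finset.sum_add_distrib, Finset.sum_const,
      nsmul_eq_mul, ← Finset.mul_sum]
    ring
  have hpt : ∀ a b : Fin n,
      |s a * s b * (∑ k, A k a * A k b) - (if a = b then s a ^ 2 else 0)|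
        ≤ μ * ((s a ^ 2 + s b ^ 2) / 2) - (if a = b then μ * s a ^ 2 else 0) := by
    intro a b
    by_cases h : a = b
    · subst h
      have h1 := hunit a
      simp_rw [sq] at h1
      rw [h1, if_pos rfl, if_pos rfl]
      have e1 : s a * s a * 1 - s a ^ 2 = 0 := by ring
      have e2 : μ * ((s a ^ 2 + s a ^ 2) / 2) - μ * s a ^ 2 = 0 := by ring
      rw [e1, e2, abs_zero]
    · rw [if_neg h, if_neg h, sub_zero, sub_zero, abs_mul, mul_comm]
      have hG : |∑ k, A k a * A k b| ≤ μ := hμ.2 ⟨a, b, h, rfl⟩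
      have hs : |s a * s b| ≤ (s a ^ 2 + s b ^ 2) / 2 := by
        rw [abs_le]
        constructor <;> nlinarith [sq_nonneg (s a + s b), sq_nonneg (s a - s b)]
      exact mul_le_mul hG hs (abs_nonneg _) hμ0
  have hmain : |∑ i, (∑ j ∈ T, s j * A i j) ^ 2 - ∑ j ∈ T, s j ^ 2|
      ≤ μ * (T.card * ∑ a ∈ T, s a ^ 2) - μ * ∑ a ∈ T, s a ^ 2 := by
    rw [hF, ← hsum, Finset.mul_sum, ← hdiag (fun a => s a ^ 2), ← hdiag (fun a => μ * s a ^ 2)]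
    simp_rw [← Finset.sum_sub_distrib]
    refine (Finset.abs_sum_le_sum_abs _ _).trans (Finset.sum_le_sum fun a _ => ?_)
    exact (Finset.abs_sum_le_sum_abs _ _).trans (Finset.sum_le_sum fun b _ => hpt a b)
  have hQ : 0 ≤ ∑ a ∈ T, s a ^ 2 := Finset.sum_nonneg fun a _ => sq_nonneg _
  have hc : (T.card : ℝ) ≤ S := by exact_mod_cast hT
  have hcm : μ * (T.card * ∑ a ∈ T, s a ^ 2) ≤ μ * (S * ∑ a ∈ T, s a ^ 2) := by gcongr
  obtain ⟨h1, h2⟩ := abs_le.1 hmain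
  constructor <;> linarith
end

section
/- Let (a⁰, b⁰) be supported on T₀ and satisfy the data-fidelity constraints ‖y^I − Φ^I a⁰‖₂ ≤ η f₀ and ‖y^D − Φ^D b⁰‖₂ ≤ η f₀ as well as |a⁰_i| ≤ f₀ and |b⁰_i| ≤ f₀ for all i, where ‖y^I‖₂ = ‖y^D‖₂ = f₀ and 0 ≤ η < 1. Take U^I = U^D = U = f₀ and ε^I = ε^D = η f₀ in (OPT2), and let (x*, a*, b*) be an optimal solution of (OPT2). Let γ = 1 − min_{i∈T₀} α_i, where α_i = min{|a⁰_i|, |b⁰_i|} / max{|a⁰_i|, |b⁰_i|} for i ∈ T₀. Suppose the block-diagonal matrix A = diag(Φ^I, Φ^D) has restricted isometry constants δ_M and δ_{M+|T₀|} for some M ≥ 1 with √(M(1−δ_{M+|T₀|})) − √(|T₀|(1+δ_M)) > 0. Then ‖[a⁰; b⁰] − [a*; b*]‖₂² ≤ [ (|T₀|/M)(C + γ√|T₀|)² + C² ] f₀², where C = (4η√M + γ|T₀|√(1+δ_M)) / (√(M(1−δ_{M+|T₀|})) − √(|T₀|(1+δ_M))). -/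
open Finset

/-- `A` satisfies the `S`-restricted isometry inequality with constant `δ`:
for every index set `T` with `|T| ≤ S` and every vector `s` supported on `T`,
`(1−δ)‖s‖₂² ≤ ‖A s‖₂² ≤ (1+δ)‖s‖₂²`. -/
def RIPBound {κ ι : Type*} [Fintype κ] [Fintype ι] [DecidableEq ι]
    (A : Matrix κ ι ℝ) (S : ℕ) (δ : ℝ) : Prop :=
  ∀ (T : Finset ι) (s : ι → ℝ), T.card ≤ S → (∀ j ∉ T, s j = 0) →
    (1 - δ) * ∑ j, s j ^ 2 ≤ ∑ i, (A.mulVec s i) ^ 2 ∧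
    ∑ i, (A.mulVec s i) ^ 2 ≤ (1 + δ) * ∑ j, s j ^ 2

/-! Helper lemmas -/

lemma jl2_nonneg {ι : Type*} [Fintype ι] (v : ι → ℝ) : 0 ≤ l2norm v := Real.sqrt_nonneg _

lemma jl2_sq {ι : Type*} [Fintype ι] (v : ι → ℝ) : l2norm v ^ 2 = ∑ i, v i ^ 2 :=
  Real.sq_sqrt (Finset.sum_nonneg fun i _ => sq_nonneg (v i))

lemma jl2_eq {ι : Type*} [Fintype ι] (v : ι → ℝ) :
    l2norm v = ‖(WithLp.toLp 2 v : EuclideanSpace ℝ ι)‖ := by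
  rw [EuclideanSpace.norm_eq, l2norm]
  simp

lemma jl2_add {ι : Type*} [Fintype ι] (u v : ι → ℝ) :
    l2norm (u + v) ≤ l2norm u + l2norm v := by
  rw [jl2_eq, jl2_eq, jl2_eq, WithLp.toLp_add]
  exact norm_add_le _ _

lemma jl2_sub {ι : Type*} [Fintype ι] (u v : ι → ℝ) :
    l2norm (u - v) ≤ l2norm u + l2norm v := by
  rw [jl2_eq, jl2_eq, jl2_eq, WithLp.toLp_sub]
  exact norm_sub_le _ _

lemma jl2_zero {ι : Type*} [Fintype ι] : l2norm (0 : ι → ℝ) = 0 := by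
  simp [l2norm]

lemma jl2_elim_sq {ι κ : Type*} [Fintype ι] [Fintype κ] (u : ι → ℝ) (v : κ → ℝ) :
    l2norm (Sum.elim u v) ^ 2 = ∑ i, u i ^ 2 + ∑ i, v i ^ 2 := by
  rw [jl2_sq, Fintype.sum_sum_type]; simp

lemma jl2_elim_le {ι κ : Type*} [Fintype ι] [Fintype κ] (u : ι → ℝ) (v : κ → ℝ) :
    l2norm (Sum.elim u v) ≤ l2norm u + l2norm v := by
  have h1 := jl2_elim_sq u v
  rw [← jl2_sq u, ← jl2_sq v] at h1
  have := jl2_nonneg u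
  have := jl2_nonneg v
  apply le_of_sq_le_sq _ (by positivity)
  nlinarith [mul_nonneg (jl2_nonneg u) (jl2_nonneg v)]

/-- top-`k` selection -/
lemma jtop {ι : Type*} [DecidableEq ι] (S : Finset ι) (m : ι → ℝ) (k : ℕ) (hk : k ≤ S.card) :
    ∃ T ⊆ S, T.card = k ∧ ∀ i ∈ T, ∀ j ∈ S \ T, m j ≤ m i := by
  induction k with
  | zero => exact ⟨∅, by simp, by simp, by simp⟩
  | succ k ih =>
    obtain ⟨T, hTS, hc, hT⟩ := ih (by omega)
    have hne : (S \ T).Nonempty := by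
      rw [← Finset.card_pos, Finset.card_sdiff_of_subset hTS]; omega
    obtain ⟨x, hx, hmax⟩ := Finset.exists_max_image (S \ T) m hne
    have hx' := Finset.mem_sdiff.1 hx
    refine ⟨insert x T, Finset.insert_subset hx'.1 hTS, ?_, ?_⟩
    · rw [Finset.card_insert_of_notMem hx'.2, hc]
    · intro i hi j hj
      have hj' : j ∈ S \ T := by
        simp only [Finset.mem_sdiff, Finset.mem_insert, not_or] at hj ⊢
        exact ⟨hj.1, hj.2.2⟩
      rcases Finset.mem_insert.1 hi with rfl | hi
      · exact hmax j hj'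
      · exact hT i hi j hj'

lemma jtop_bound {ι : Type*} [DecidableEq ι] (S T : Finset ι) (m : ι → ℝ) (M : ℕ) (hM : 1 ≤ M)
    (hc : T.card = M) (hT : ∀ i ∈ T, ∀ j ∈ S \ T, m j ≤ m i) :
    ∀ j ∈ S \ T, m j ≤ (∑ i ∈ T, m i) / M := by
  intro j hj
  have hMp : (0 : ℝ) < M := by exact_mod_cast hM
  rw [le_div_iff₀ hMp]
  have := Finset.card_nsmul_le_sum T m (m j) (fun i hi => hT i hi j hj)
  rw [hc, nsmul_eq_mul] at this
  linarith

lemma jtail {ι : Type*} [DecidableEq ι] (m : ι → ℝ) (hm : ∀ i, 0 ≤ m i) (M : ℕ) (hM : 1 ≤ M)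
    (q : Finset ι → ℝ) (K : ℝ) (hK : 0 ≤ K)
    (hadd : ∀ S T : Finset ι, T ⊆ S → q S ≤ q T + q (S \ T))
    (hq : ∀ T : Finset ι, T.card ≤ M → q T ≤ K * Real.sqrt (∑ i ∈ T, m i ^ 2)) :
    ∀ (c : ℕ) (S : Finset ι) (B : ℝ), S.card ≤ c → 0 ≤ B → (∀ i ∈ S, m i ≤ B) →
      q S ≤ K * (Real.sqrt M * B + (∑ i ∈ S, m i) / Real.sqrt M) := by
  have hMp : (0 : ℝ) < M := by exact_mod_cast hM
  have hs : 0 < Real.sqrt M := Real.sqrt_pos.2 hMp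
  have hss : Real.sqrt M * Real.sqrt M = M := Real.mul_self_sqrt hMp.le
  have small : ∀ (T : Finset ι) (B : ℝ), T.card ≤ M → 0 ≤ B → (∀ i ∈ T, m i ≤ B) →
      q T ≤ K * (Real.sqrt M * B) := by
    intro T B hT hB hb
    refine (hq T hT).trans (mul_le_mul_of_nonneg_left ?_ hK)
    rw [Real.sqrt_le_left (by positivity)]
    have h1 : ∑ i ∈ T, m i ^ 2 ≤ T.card • B ^ 2 :=
      Finset.sum_le_card_nsmul _ _ _ (fun i hi => pow_le_pow_left₀ (hm i) (hb i hi) 2)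
    rw [nsmul_eq_mul] at h1
    have h2 : (T.card : ℝ) ≤ M := by exact_mod_cast hT
    have h3 : (T.card : ℝ) * B ^ 2 ≤ M * B ^ 2 := mul_le_mul_of_nonneg_right h2 (sq_nonneg B)
    rw [mul_pow, Real.sq_sqrt hMp.le]
    linarith
  intro c
  induction c with
  | zero =>
    intro S B hS hB hb
    refine (small S B (by omega) hB hb).trans (mul_le_mul_of_nonneg_left ?_ hK)
    have : 0 ≤ (∑ i ∈ S, m i) / Real.sqrt M :=
      div_nonneg (Finset.sum_nonneg fun i _ => hm i) hs.le
    linarith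
  | succ c ih =>
    intro S B hS hB hb
    by_cases hle : S.card ≤ M
    · refine (small S B hle hB hb).trans (mul_le_mul_of_nonneg_left ?_ hK)
      have : 0 ≤ (∑ i ∈ S, m i) / Real.sqrt M :=
        div_nonneg (Finset.sum_nonneg fun i _ => hm i) hs.le
      linarith
    · obtain ⟨T, hTS, hc, hT⟩ := jtop S m M (by omega)
      have hb' := jtop_bound S T m M hM hc hT
      have h1 := small T B hc.le hB (fun i hi => hb i (hTS hi))
      have h2 := ih (S \ T) ((∑ i ∈ T, m i) / M)
        (by rw [Finset.card_sdiff_of_subset hTS]; omega)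
        (div_nonneg (Finset.sum_nonneg fun i _ => hm i) hMp.le) hb'
      have h3 := hadd S T hTS
      have h4 : Real.sqrt M * ((∑ i ∈ T, m i) / M) = (∑ i ∈ T, m i) / Real.sqrt M := by
        rw [eq_div_iff hs.ne']
        field_simp
        rw [Real.sq_sqrt hMp.le, mul_comm]
      have h5 := Finset.sum_sdiff (f := m) hTS
      rw [h4] at h2
      rw [← h5, add_div]
      linarith

lemma jselect {ι : Type*} [DecidableEq ι] (m : ι → ℝ) (hm : ∀ i, 0 ≤ m i) (M : ℕ) (hM : 1 ≤ M)
    (S : Finset ι) :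
    ∃ T ⊆ S, T.card ≤ M ∧ ∀ (q : Finset ι → ℝ) (K : ℝ), 0 ≤ K →
      (∀ S T : Finset ι, T ⊆ S → q S ≤ q T + q (S \ T)) →
      (∀ T : Finset ι, T.card ≤ M → q T ≤ K * Real.sqrt (∑ i ∈ T, m i ^ 2)) →
      q (S \ T) ≤ K * ((∑ i ∈ S, m i) / Real.sqrt M) := by
  have hMp : (0 : ℝ) < M := by exact_mod_cast hM
  have hs : 0 < Real.sqrt M := Real.sqrt_pos.2 hMp
  by_cases hle : S.card ≤ M
  · refine ⟨S, subset_rfl, hle, ?_⟩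
    intro q K hK _ hq
    have h1 := hq ∅ (by simp)
    simp only [Finset.sum_empty, Real.sqrt_zero, mul_zero] at h1
    rw [Finset.sdiff_self]
    exact h1.trans (mul_nonneg hK (div_nonneg (Finset.sum_nonneg fun i _ => hm i) hs.le))
  · obtain ⟨T, hTS, hc, hT⟩ := jtop S m M (by omega)
    refine ⟨T, hTS, hc.le, ?_⟩
    intro q K hK hadd hq
    have hb' := jtop_bound S T m M hM hc hT
    have h2 := jtail m hm M hM q K hK hadd hq _ (S \ T) ((∑ i ∈ T, m i) / M) le_rfl
        (div_nonneg (Finset.sum_nonneg fun i _ => hm i) hMp.le) hb'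
    have h4 : Real.sqrt M * ((∑ i ∈ T, m i) / M) = (∑ i ∈ T, m i) / Real.sqrt M := by
      rw [eq_div_iff hs.ne']
      field_simp
      rw [Real.sq_sqrt hMp.le, mul_comm]
    have h5 := Finset.sum_sdiff (f := m) hTS
    rw [h4] at h2
    rw [← h5, add_div]
    linarith

/-- restriction of a vector to an index set -/
noncomputable def jres {N : ℕ} (a : Fin N → ℝ) (T : Finset (Fin N)) : Fin N → ℝ :=
  fun i => if i ∈ T then a i else 0

lemma jres_add {N : ℕ} (a : Fin N → ℝ) (S T : Finset (Fin N)) (h : T ⊆ S) :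
    jres a S = jres a T + jres a (S \ T) := by
  funext i
  have := @h i
  by_cases h1 : i ∈ S <;> by_cases h2 : i ∈ T <;> simp_all [jres]

lemma jres_sq {N : ℕ} (a : Fin N → ℝ) (T : Finset (Fin N)) :
    ∑ i, jres a T i ^ 2 = ∑ i ∈ T, a i ^ 2 := by
  simp [jres, ite_pow, Finset.sum_ite_mem]

lemma jelim_add {ι κ : Type*} (a b : ι → ℝ) (c d : κ → ℝ) :
    Sum.elim (a + b) (c + d) = Sum.elim a c + Sum.elim b d := by
  funext i; cases i <;> rfl

lemma jrip {n N : ℕ} (ΦI ΦD : Matrix (Fin n) (Fin N) ℝ) (k : ℕ) (δ : ℝ)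
    (h : RIPBound (Matrix.fromBlocks ΦI 0 0 ΦD) k δ) (a b : Fin N → ℝ) (T : Finset (Fin N))
    (hT : T.card ≤ k) :
    (1 - δ) * ∑ i ∈ T, (a i ^ 2 + b i ^ 2) ≤
      l2norm (Sum.elim (ΦI.mulVec (jres a T)) (ΦD.mulVec (jres b T))) ^ 2 ∧
    l2norm (Sum.elim (ΦI.mulVec (jres a T)) (ΦD.mulVec (jres b T))) ^ 2 ≤
      (1 + δ) * ∑ i ∈ T, (a i ^ 2 + b i ^ 2) := by
  have h1 := h (T.map Function.Embedding.inl) (Sum.elim (jres a T) 0) (by simpa using hT) (by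
    rintro (j | j) hj
    · simp at hj; simp [jres, hj]
    · simp)
  have h2 := h (T.map Function.Embedding.inr) (Sum.elim 0 (jres b T)) (by simpa using hT) (by
    rintro (j | j) hj
    · simp
    · simp at hj; simp [jres, hj])
  simp only [Matrix.fromBlocks_mulVec, Fintype.sum_sum_type, Sum.elim_inl, Sum.elim_inr,
    Sum.elim_comp_inl, Sum.elim_comp_inr, Matrix.mulVec_zero, Matrix.zero_mulVec, add_zero,
    zero_add, Pi.zero_apply, ne_eq, OfNat.ofNat_ne_zero, not_false_eq_true, zero_pow,
    Finset.sum_const_zero, jres_sq] at h1 h2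
  rw [jl2_elim_sq, Finset.sum_add_distrib, mul_add, mul_add]
  exact ⟨add_le_add h1.1 h2.1, add_le_add h1.2 h2.2⟩

/-- Recovery-error bound for Joint Basis Pursuit (Theorem 1): if `(a⁰, b⁰)` is supported on
`T₀`, satisfies the data-fidelity constraints with `ε = η f₀` and the magnitude bounds `f₀`,
`(x*, a*, b*)` is an optimal solution of (OPT2) with `U = f₀`, `ε = η f₀`, and the
block-diagonal matrix `A = diag(Φ^I, Φ^D)` satisfies the restricted isometry inequalities with
constants `δ_M` and `δ_{M+|T₀|}`, then
`‖[a⁰; b⁰] − [a*; b*]‖₂² ≤ [ (|T₀|/M)(C + γ√|T₀|)² + C² ] f₀²`. -/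
theorem jbp_recovery_error_bound {n N : ℕ}
    (ΦI ΦD : Matrix (Fin n) (Fin N) ℝ) (yI yD : Fin n → ℝ)
    (f₀ η γ C δM δM' : ℝ) (M : ℕ) (hM : 1 ≤ M)
    (a0 b0 xs as bs : Fin N → ℝ) (T0 : Finset (Fin N)) (hT0ne : T0.Nonempty)
    (hfI : l2norm yI = f₀) (hfD : l2norm yD = f₀)
    (hη0 : 0 ≤ η) (hη1 : η < 1)
    (hsupp : ∀ i, i ∉ T0 → a0 i = 0 ∧ b0 i = 0)
    (hT0pos : ∀ i ∈ T0, 0 < max |a0 i| |b0 i|)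
    (hfidI : l2norm (yI - ΦI.mulVec a0) ≤ η * f₀)
    (hfidD : l2norm (yD - ΦD.mulVec b0) ≤ η * f₀)
    (hbnda : ∀ i, |a0 i| ≤ f₀) (hbndb : ∀ i, |b0 i| ≤ f₀)
    (hopt : OPT2Optimal ΦI ΦD yI yD (η * f₀) (η * f₀) f₀ f₀ xs as bs)
    (hγ : γ = 1 - T0.inf' hT0ne fun i => min |a0 i| |b0 i| / max |a0 i| |b0 i|)
    (hRIP1 : RIPBound (Matrix.fromBlocks ΦI 0 0 ΦD) M δM)
    (hRIP2 : RIPBound (Matrix.fromBlocks ΦI 0 0 ΦD) (M + T0.card) δM')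
    (hpos : 0 < Real.sqrt ((M : ℝ) * (1 - δM')) - Real.sqrt ((T0.card : ℝ) * (1 + δM)))
    (hC : C = (4 * η * Real.sqrt (M : ℝ) + γ * (T0.card : ℝ) * Real.sqrt (1 + δM)) /
        (Real.sqrt ((M : ℝ) * (1 - δM')) - Real.sqrt ((T0.card : ℝ) * (1 + δM)))) :
    ∑ i, ((a0 i - as i) ^ 2 + (b0 i - bs i) ^ 2) ≤
      (((T0.card : ℝ) / (M : ℝ)) * (C + γ * Real.sqrt (T0.card : ℝ)) ^ 2 + C ^ 2) * f₀ ^ 2 := by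
  have hMp : (0 : ℝ) < M := by exact_mod_cast hM
  have hs : 0 < Real.sqrt M := Real.sqrt_pos.2 hMp
  set t : ℝ := (T0.card : ℝ) with ht
  have ht1 : 0 < t := by
    rw [ht]; exact_mod_cast hT0ne.card_pos
  -- f₀ is positive
  have hf : 0 < f₀ := by
    obtain ⟨i, hi⟩ := hT0ne
    exact (hT0pos i hi).trans_le (max_le (hbnda i) (hbndb i))
  have hγi : ∀ i ∈ T0, 1 - γ ≤ min |a0 i| |b0 i| / max |a0 i| |b0 i| := by
    intro i hi
    have := Finset.inf'_le (fun i => min |a0 i| |b0 i| / max |a0 i| |b0 i|) hi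
    rw [hγ, sub_sub_cancel]; exact this
  have hγ0 : 0 ≤ γ := by
    obtain ⟨i, hi⟩ := hT0ne
    have h1 := hγi i hi
    have h2 : min |a0 i| |b0 i| / max |a0 i| |b0 i| ≤ 1 :=
      div_le_one_of_le₀ (min_le_max) (hT0pos i hi).le
    linarith
  obtain ⟨⟨hx01, hfeI, hfeD, hxa, hxb⟩, hmin⟩ := hopt
  -- the errors
  set u : Fin N → ℝ := a0 - as with hu
  set v : Fin N → ℝ := b0 - bs with hv
  set m : Fin N → ℝ := fun i => max |as i| |bs i| with hm
  have hm0 : ∀ i, 0 ≤ m i := fun i => (abs_nonneg _).trans (le_max_left _ _)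
  -- comparison of the sums of maxima
  have hsum : ∑ i, m i ≤ ∑ i ∈ T0, max |a0 i| |b0 i| := by
    have h1 := hmin (fun i => max |a0 i| |b0 i| / f₀) a0 b0 ⟨fun i => ⟨by positivity,
      div_le_one_of_le₀ (max_le (hbnda i) (hbndb i)) hf.le⟩, hfidI, hfidD,
      fun i => by rw [mul_div_cancel₀ _ hf.ne']; exact le_max_left _ _,
      fun i => by rw [mul_div_cancel₀ _ hf.ne']; exact le_max_right _ _⟩
    rw [← Finset.sum_div, le_div_iff₀ hf] at h1
    have h2 : ∑ i, m i ≤ ∑ i, f₀ * xs i := Finset.sum_le_sum fun i _ => max_le (hxa i) (hxb i)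
    rw [← Finset.mul_sum] at h2
    have h3 : ∑ i ∈ T0, max |a0 i| |b0 i| = ∑ i, max |a0 i| |b0 i| := by
      apply Finset.sum_subset (Finset.subset_univ _)
      intro i _ hi
      simp [hsupp i hi]
    rw [h3]; linarith
  set S : Finset (Fin N) := T0ᶜ with hS
  have hcone : 2 * ∑ i ∈ S, m i ≤ ∑ i ∈ T0, (|u i| + |v i|) + γ * t * f₀ := by
    have h1 : ∑ i ∈ T0, m i + ∑ i ∈ S, m i = ∑ i, m i := Finset.sum_add_sum_compl T0 m
    have h2 : ∑ i ∈ T0, 2 * max |a0 i| |b0 i| ≤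
        ∑ i ∈ T0, (2 * m i + (|u i| + |v i|) + γ * f₀) := by
      apply Finset.sum_le_sum
      intro i hi
      have e1 := hγi i hi
      rw [le_div_iff₀ (hT0pos i hi)] at e1
      have e2 : max |a0 i| |b0 i| ≤ f₀ := max_le (hbnda i) (hbndb i)
      have e3 := mul_le_mul_of_nonneg_left e2 hγ0
      have e4 := max_add_min |a0 i| |b0 i|
      have e5 : |a0 i| ≤ |as i| + |u i| := by
        have := abs_add_le (as i) (u i)
        simpa [hu] using this
      have e6 : |b0 i| ≤ |bs i| + |v i| := by
        have := abs_add_le (bs i) (v i)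
        simpa [hv] using this
      have e7 : |as i| ≤ m i := le_max_left _ _
      have e8 : |bs i| ≤ m i := le_max_right _ _
      linarith
    rw [← Finset.mul_sum, Finset.sum_add_distrib, Finset.sum_add_distrib, ← Finset.mul_sum,
      Finset.sum_const, nsmul_eq_mul] at h2
    linarith
  -- the ℓ1 norm on T0
  set R : Finset (Fin N) → ℝ := fun T => Real.sqrt (∑ i ∈ T, (u i ^ 2 + v i ^ 2)) with hR
  have hR0 : ∀ T, 0 ≤ R T := fun T => Real.sqrt_nonneg _
  have hRsq : ∀ T, R T ^ 2 = ∑ i ∈ T, (u i ^ 2 + v i ^ 2) := fun T =>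
    Real.sq_sqrt (Finset.sum_nonneg fun i _ => by positivity)
  have hRl : ∀ T, R T = l2norm (Sum.elim (jres u T) (jres v T)) := by
    intro T
    have h1 := jl2_elim_sq (jres u T) (jres v T)
    rw [jres_sq, jres_sq, ← Finset.sum_add_distrib, ← hRsq] at h1
    exact ((sq_eq_sq₀ (jl2_nonneg _) (hR0 T)).1 h1).symm
  have hl1 : ∑ i ∈ T0, (|u i| + |v i|) ≤ Real.sqrt 2 * Real.sqrt t * R T0 := by
    apply le_of_sq_le_sq _ (by have := hR0 T0; positivity)
    have h1 := sq_sum_le_card_mul_sum_sq (s := T0) (f := fun i => |u i| + |v i|)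
    have h2 : ∑ i ∈ T0, (|u i| + |v i|) ^ 2 ≤ ∑ i ∈ T0, 2 * (u i ^ 2 + v i ^ 2) := by
      apply Finset.sum_le_sum
      intro i _
      rw [← sq_abs (u i), ← sq_abs (v i)]
      nlinarith [sq_nonneg (|u i| - |v i|)]
    rw [← Finset.mul_sum, ← hRsq] at h2
    rw [mul_pow, mul_pow, Real.sq_sqrt (by norm_num), Real.sq_sqrt ht1.le]
    have h3 := mul_le_mul_of_nonneg_left h2 ht1.le
    linarith
  have h2p : 0 < Real.sqrt 2 := by positivity
  have h22 : Real.sqrt 2 * Real.sqrt 2 = 2 := Real.mul_self_sqrt (by norm_num)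
  have h21 : 1 ≤ Real.sqrt 2 := by rw [Real.one_le_sqrt]; norm_num
  have hγt : 0 ≤ γ * t * f₀ := by positivity
  have hmS : Real.sqrt 2 * ∑ i ∈ S, m i ≤ Real.sqrt t * R T0 + γ * t * f₀ := by
    have h1 := hcone.trans (add_le_add_left hl1 _)
    have h3 : γ * t * f₀ ≤ Real.sqrt 2 * (γ * t * f₀) := by nlinarith
    have h4 : Real.sqrt 2 * (Real.sqrt 2 * ∑ i ∈ S, m i) ≤
        Real.sqrt 2 * (Real.sqrt t * R T0 + γ * t * f₀) := by
      rw [← mul_assoc, h22]; linarith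
    exact le_of_mul_le_mul_left h4 h2p
  obtain ⟨T1, hT1S, hT1c, hsel⟩ := jselect m hm0 M hM S
  set W : Finset (Fin N) := S \ T1 with hW
  -- restricted vector norms: the functional is replaced by restriction to S
  have hRm : ∀ T ⊆ S, R T ≤ Real.sqrt 2 * Real.sqrt (∑ i ∈ T, m i ^ 2) := by
    intro T hTS
    rw [← Real.sqrt_mul (by norm_num)]
    apply Real.sqrt_le_sqrt
    rw [Finset.mul_sum]
    apply Finset.sum_le_sum
    intro i hi
    have hi0 := hsupp i (by simpa [hS] using hTS hi)
    have e1 : u i ^ 2 ≤ m i ^ 2 := by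
      rw [← sq_abs (u i)]
      apply pow_le_pow_left₀ (abs_nonneg _)
      simp [hu, hi0, hm]
    have e2 : v i ^ 2 ≤ m i ^ 2 := by
      rw [← sq_abs (v i)]
      apply pow_le_pow_left₀ (abs_nonneg _)
      simp [hv, hi0, hm]
    linarith
  have hRadd : ∀ S T : Finset (Fin N), T ⊆ S → R S ≤ R T + R (S \ T) := by
    intro S T h
    rw [hRl, hRl, hRl, jres_add u S T h, jres_add v S T h, jelim_add]
    exact jl2_add _ _
  set Q : Finset (Fin N) → ℝ := fun T =>
    l2norm (Sum.elim (ΦI.mulVec (jres u T)) (ΦD.mulVec (jres v T))) with hQ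
  have hQadd : ∀ S T : Finset (Fin N), T ⊆ S → Q S ≤ Q T + Q (S \ T) := by
    intro S T h
    simp only [hQ]
    rw [jres_add u S T h, jres_add v S T h, Matrix.mulVec_add, Matrix.mulVec_add, jelim_add]
    exact jl2_add _ _
  have hQadd' : ∀ S T : Finset (Fin N), T ⊆ S → Q T ≤ Q S + Q (S \ T) := by
    intro S T h
    simp only [hQ]
    have e : Sum.elim (ΦI.mulVec (jres u T)) (ΦD.mulVec (jres v T)) =
      Sum.elim (ΦI.mulVec (jres u S)) (ΦD.mulVec (jres v S)) -
        Sum.elim (ΦI.mulVec (jres u (S \ T))) (ΦD.mulVec (jres v (S \ T))) := by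
      rw [jres_add u S T h, jres_add v S T h, Matrix.mulVec_add, Matrix.mulVec_add, jelim_add]
      simp
    rw [e]
    exact jl2_sub _ _
  -- signs of the RIP constants
  have hδ : 0 ≤ 1 + δM := by
    obtain ⟨i, hi⟩ := hT0ne
    have h1 := (jrip ΦI ΦD M δM hRIP1 (fun _ => 1) (fun _ => 0) {i} (by simpa using hM)).2
    have h2 := (sq_nonneg _).trans h1
    simpa using h2
  have hδ' : 0 < 1 - δM' := by
    by_contra hcon
    have h1 : Real.sqrt ((M : ℝ) * (1 - δM')) = 0 :=
      Real.sqrt_eq_zero_of_nonpos (by nlinarith)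
    have := Real.sqrt_nonneg (t * (1 + δM))
    linarith
  have hQR : ∀ T : Finset (Fin N), T.card ≤ M → Q T ≤ Real.sqrt (1 + δM) * R T := by
    intro T hT
    have h1 := (jrip ΦI ΦD M δM hRIP1 u v T hT).2
    rw [← hRsq] at h1
    apply le_of_sq_le_sq _ (mul_nonneg (Real.sqrt_nonneg _) (hR0 T))
    rw [mul_pow, Real.sq_sqrt hδ]
    exact h1
  have hQlow : ∀ T : Finset (Fin N), T.card ≤ M + T0.card → Real.sqrt (1 - δM') * R T ≤ Q T := by
    intro T hT
    have h1 := (jrip ΦI ΦD _ δM' hRIP2 u v T hT).1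
    rw [← hRsq] at h1
    apply le_of_sq_le_sq _ (jl2_nonneg _)
    rw [mul_pow, Real.sq_sqrt hδ'.le]
    exact h1
  have hinter : ∀ S' T : Finset (Fin N), T ⊆ S' → (S' \ T) ∩ S = (S' ∩ S) \ (T ∩ S) := by
    intro S' T _
    ext i; simp only [Finset.mem_inter, Finset.mem_sdiff]; tauto
  have hWS : W ∩ S = W := Finset.inter_eq_left.2 Finset.sdiff_subset
  have hmmono : ∀ T : Finset (Fin N), Real.sqrt (∑ i ∈ T ∩ S, m i ^ 2) ≤
      Real.sqrt (∑ i ∈ T, m i ^ 2) := fun T => Real.sqrt_le_sqrt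
    (Finset.sum_le_sum_of_subset_of_nonneg Finset.inter_subset_left
      fun i _ _ => sq_nonneg (m i))
  have hRW : R W ≤ Real.sqrt 2 * ((∑ i ∈ S, m i) / Real.sqrt M) := by
    have := hsel (fun T => R (T ∩ S)) (Real.sqrt 2) h2p.le
      (fun S' T h => by
        simp only [hinter S' T h]
        exact hRadd _ _ (Finset.inter_subset_inter_right h))
      (fun T _ => (hRm _ Finset.inter_subset_right).trans
        (mul_le_mul_of_nonneg_left (hmmono T) h2p.le))
    simpa only [hWS] using this
  have hQW : Q W ≤ (Real.sqrt (1 + δM) * Real.sqrt 2) * ((∑ i ∈ S, m i) / Real.sqrt M) := by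
    have := hsel (fun T => Q (T ∩ S)) (Real.sqrt (1 + δM) * Real.sqrt 2) (by positivity)
      (fun S' T h => by
        simp only [hinter S' T h]
        exact hQadd _ _ (Finset.inter_subset_inter_right h))
      (fun T hT => by
        have h1 := hQR (T ∩ S) ((Finset.card_le_card Finset.inter_subset_left).trans hT)
        have h2 := (hRm (T ∩ S) Finset.inter_subset_right).trans
          (mul_le_mul_of_nonneg_left (hmmono T) h2p.le)
        rw [mul_assoc]
        exact h1.trans (mul_le_mul_of_nonneg_left h2 (Real.sqrt_nonneg _)))
    simpa only [hWS] using this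
  -- the data-fidelity bound
  have hQall : Q Finset.univ ≤ 4 * η * f₀ := by
    have e1 : jres u Finset.univ = u := by funext i; simp [jres]
    have e2 : jres v Finset.univ = v := by funext i; simp [jres]
    simp only [hQ, e1, e2]
    have f1 : l2norm (ΦI.mulVec u) ≤ 2 * (η * f₀) := by
      have : ΦI.mulVec u = (yI - ΦI.mulVec as) - (yI - ΦI.mulVec a0) := by
        rw [hu, Matrix.mulVec_sub]; abel
      rw [this]
      linarith [jl2_sub (yI - ΦI.mulVec as) (yI - ΦI.mulVec a0)]
    have f2 : l2norm (ΦD.mulVec v) ≤ 2 * (η * f₀) := by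
      have : ΦD.mulVec v = (yD - ΦD.mulVec bs) - (yD - ΦD.mulVec b0) := by
        rw [hv, Matrix.mulVec_sub]; abel
      rw [this]
      linarith [jl2_sub (yD - ΦD.mulVec bs) (yD - ΦD.mulVec b0)]
    linarith [jl2_elim_le (ΦI.mulVec u) (ΦD.mulVec v)]
  set V : Finset (Fin N) := T0 ∪ T1 with hV
  have hVW : Finset.univ \ V = W := by
    ext i; simp [hV, hW, hS]
  have hVc : V.card ≤ M + T0.card := (Finset.card_union_le _ _).trans (by omega)
  have hRT0V : R T0 ≤ R V := Real.sqrt_le_sqrt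
    (Finset.sum_le_sum_of_subset_of_nonneg Finset.subset_union_left fun i _ _ => by positivity)
  have hmain1 := hQlow V hVc
  have hmain2 := hQadd' Finset.univ V (Finset.subset_univ _)
  rw [hVW] at hmain2
  have htsq : Real.sqrt t * Real.sqrt t = t := Real.mul_self_sqrt ht1.le
  have hmS' : Real.sqrt 2 * ∑ i ∈ S, m i ≤ Real.sqrt t * R V + γ * t * f₀ := by
    have := mul_le_mul_of_nonneg_left hRT0V (Real.sqrt_nonneg t)
    linarith
  have hRWm : Real.sqrt M * R W ≤ Real.sqrt t * R V + γ * t * f₀ := by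
    have h1 := mul_le_mul_of_nonneg_left hRW hs.le
    have h2 : Real.sqrt M * (Real.sqrt 2 * ((∑ i ∈ S, m i) / Real.sqrt M)) =
      Real.sqrt 2 * ∑ i ∈ S, m i := by field_simp
    linarith
  have hQWm : Real.sqrt M * Q W ≤ Real.sqrt (1 + δM) * (Real.sqrt t * R V + γ * t * f₀) := by
    have h1 := mul_le_mul_of_nonneg_left hQW hs.le
    have h2 : Real.sqrt M * ((Real.sqrt (1 + δM) * Real.sqrt 2) * ((∑ i ∈ S, m i) / Real.sqrt M)) =
      Real.sqrt (1 + δM) * (Real.sqrt 2 * ∑ i ∈ S, m i) := by field_simp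
    rw [h2] at h1
    exact h1.trans (mul_le_mul_of_nonneg_left hmS' (Real.sqrt_nonneg _))
  rw [Real.sqrt_mul hMp.le, Real.sqrt_mul ht1.le] at hpos hC
  have hRV : R V ≤ C * f₀ := by
    rw [hC, div_mul_eq_mul_div, le_div_iff₀ hpos]
    have h1 := mul_le_mul_of_nonneg_left (hmain1.trans (hmain2.trans (add_le_add_left hQall _))) hs.le
    linarith
  have hC0 : 0 ≤ C := by
    rw [hC]; exact div_nonneg (by positivity) hpos.le
  have hRWf : Real.sqrt M * R W ≤ Real.sqrt t * ((C + γ * Real.sqrt t) * f₀) := by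
    have h1 := mul_le_mul_of_nonneg_left hRV (Real.sqrt_nonneg t)
    have h2 : Real.sqrt t * ((C + γ * Real.sqrt t) * f₀) =
      Real.sqrt t * (C * f₀) + γ * (Real.sqrt t * Real.sqrt t) * f₀ := by ring
    rw [h2, htsq]; linarith
  have hW2 : R W ^ 2 ≤ t / M * (C + γ * Real.sqrt t) ^ 2 * f₀ ^ 2 := by
    have h1 := pow_le_pow_left₀ (mul_nonneg hs.le (hR0 W)) hRWf 2
    rw [mul_pow, mul_pow, Real.sq_sqrt hMp.le, Real.sq_sqrt ht1.le] at h1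
    have h2 : t / M * (C + γ * Real.sqrt t) ^ 2 * f₀ ^ 2 =
      (t * ((C + γ * Real.sqrt t) * f₀) ^ 2) / M := by ring
    rw [h2, le_div_iff₀ hMp]; linarith
  have hV2 : R V ^ 2 ≤ C ^ 2 * f₀ ^ 2 := by
    have h1 := pow_le_pow_left₀ (hR0 V) hRV 2
    rwa [mul_pow] at h1
  have hfin : ∑ i, ((a0 i - as i) ^ 2 + (b0 i - bs i) ^ 2) = R V ^ 2 + R W ^ 2 := by
    rw [hRsq, hRsq, ← hVW, add_comm, Finset.sum_sdiff (Finset.subset_univ V)]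
    rfl
  rw [hfin]
  linarith
end

section
/- Let U^I = U^D = U = f₀ and ε^I = ε^D = η f₀ in (OPT2), let (a⁰, b⁰) be supported on T₀ with |a⁰_i| ≤ f₀, |b⁰_i| ≤ f₀ for all i and OPT2-feasible together with x⁰ defined by U x⁰_i = max{|a⁰_i|, |b⁰_i|}, and let (x*, a*, b*) be an optimal solution of (OPT2). Let γ = 1 − min_{i∈T₀} α_i with α_i = min{|a⁰_i|, |b⁰_i|}/max{|a⁰_i|, |b⁰_i|} for i ∈ T₀. Then the error vector h := [a*; b*] − [a⁰; b⁰] ∈ ℝ^{2N} satisfies the cone constraint ‖h_{T₀^C}‖₁ ≤ ‖h_{T₀}‖₁ + γ U |T₀|, where h_{T₀} denotes the components of h (in both the a-part and the b-part) with indices in T₀ and h_{T₀^C} those with indices in the complement of T₀. -/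
open Finset

/-- Cone constraint on the error vector `h = [a*; b*] − [a⁰; b⁰]` (Lemma 3): if `(a⁰, b⁰)` is
supported on `T₀`, bounded by `f₀`, and OPT2-feasible together with `x⁰` defined by
`f₀ x⁰_i = max |a⁰_i| |b⁰_i|`, and `(x*, a*, b*)` is an optimal solution of (OPT2) with
`U = f₀` and `ε = η f₀`, then `‖h_{T₀ᶜ}‖₁ ≤ ‖h_{T₀}‖₁ + γ f₀ |T₀|`. -/
theorem jbp_cone_constraint {n N : ℕ}
    (ΦI ΦD : Matrix (Fin n) (Fin N) ℝ) (yI yD : Fin n → ℝ)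
    (f₀ η γ : ℝ) (hf₀ : 0 < f₀) (hη0 : 0 ≤ η) (hη1 : η < 1)
    (a0 b0 x0 xs as bs : Fin N → ℝ) (T0 : Finset (Fin N)) (hT0ne : T0.Nonempty)
    (hsupp : ∀ i, i ∉ T0 → a0 i = 0 ∧ b0 i = 0)
    (hT0pos : ∀ i ∈ T0, 0 < max |a0 i| |b0 i|)
    (hbnda : ∀ i, |a0 i| ≤ f₀) (hbndb : ∀ i, |b0 i| ≤ f₀)
    (hx0 : ∀ i, f₀ * x0 i = max |a0 i| |b0 i|)
    (hfeas : OPT2Feasible ΦI ΦD yI yD (η * f₀) (η * f₀) f₀ f₀ x0 a0 b0)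
    (hopt : OPT2Optimal ΦI ΦD yI yD (η * f₀) (η * f₀) f₀ f₀ xs as bs)
    (hγ : γ = 1 - T0.inf' hT0ne fun i => min |a0 i| |b0 i| / max |a0 i| |b0 i|) :
    ∑ i ∈ T0ᶜ, (|as i - a0 i| + |bs i - b0 i|) ≤
      ∑ i ∈ T0, (|as i - a0 i| + |bs i - b0 i|) + γ * f₀ * (T0.card : ℝ) := by
  obtain ⟨⟨_, _, _, ha, hb⟩, hmin⟩ := hopt
  have hsum := hmin x0 a0 b0 hfeas
  have h1 : ∑ i, f₀ * xs i ≤ ∑ i, max |a0 i| |b0 i| := by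
    rw [← Finset.sum_congr rfl (fun i _ => hx0 i), ← Finset.mul_sum, ← Finset.mul_sum]
    exact mul_le_mul_of_nonneg_left hsum hf₀.le
  rw [← Finset.sum_add_sum_compl T0, ← Finset.sum_add_sum_compl T0] at h1
  have h2 : ∑ i ∈ T0ᶜ, max |a0 i| |b0 i| = 0 := by
    apply Finset.sum_eq_zero
    intro i hi
    obtain ⟨h, h'⟩ := hsupp i (Finset.mem_compl.1 hi)
    simp [h, h']
  have h3 : ∑ i ∈ T0ᶜ, (|as i - a0 i| + |bs i - b0 i|) ≤ ∑ i ∈ T0ᶜ, 2 * (f₀ * xs i) := by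
    apply Finset.sum_le_sum
    intro i hi
    obtain ⟨h, h'⟩ := hsupp i (Finset.mem_compl.1 hi)
    rw [h, h', sub_zero, sub_zero]
    linarith [ha i, hb i]
  have h4 : ∑ i ∈ T0, (2 * max |a0 i| |b0 i| - 2 * (f₀ * xs i)) ≤
      ∑ i ∈ T0, ((|as i - a0 i| + |bs i - b0 i|) + γ * f₀) := by
    apply Finset.sum_le_sum
    intro i hi
    have hp := hT0pos i hi
    have hα : T0.inf' hT0ne (fun i => min |a0 i| |b0 i| / max |a0 i| |b0 i|) ≤
        min |a0 i| |b0 i| / max |a0 i| |b0 i| := Finset.inf'_le _ hi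
    have hγ1 : 1 - min |a0 i| |b0 i| / max |a0 i| |b0 i| ≤ γ := by rw [hγ]; linarith
    have hle : min |a0 i| |b0 i| / max |a0 i| |b0 i| ≤ 1 := by
      rw [div_le_one hp]; exact min_le_max
    have hγ0 : 0 ≤ γ := by linarith
    have hM : max |a0 i| |b0 i| ≤ f₀ := max_le (hbnda i) (hbndb i)
    have hk : max |a0 i| |b0 i| - min |a0 i| |b0 i| ≤ γ * f₀ := by
      calc max |a0 i| |b0 i| - min |a0 i| |b0 i|
          = (1 - min |a0 i| |b0 i| / max |a0 i| |b0 i|) * max |a0 i| |b0 i| := by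
            rw [sub_mul, div_mul_cancel₀ _ hp.ne', one_mul]
        _ ≤ γ * max |a0 i| |b0 i| := mul_le_mul_of_nonneg_right hγ1 hp.le
        _ ≤ γ * f₀ := mul_le_mul_of_nonneg_left hM hγ0
    have e := min_add_max |a0 i| |b0 i|
    have t1 := abs_sub_abs_le_abs_sub (a0 i) (as i)
    have t2 := abs_sub_abs_le_abs_sub (b0 i) (bs i)
    rw [abs_sub_comm] at t1 t2
    linarith [ha i, hb i]
  rw [Finset.sum_sub_distrib, ← Finset.mul_sum, ← Finset.mul_sum, Finset.sum_add_distrib (g := fun _ => γ * f₀),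
    Finset.sum_const, nsmul_eq_mul] at h4
  rw [← Finset.mul_sum] at h3
  linarith
end

section
/- Let a*, b* ∈ ℝ^N, U > 0, and define x* by U x*_i = max{|a*_i|, |b*_i|} for all i. Let a⁰, b⁰ ∈ ℝ^N be supported on T₀ with max{|a⁰_i|, |b⁰_i|} > 0 for i ∈ T₀, satisfy |a⁰_i| ≤ U and |b⁰_i| ≤ U, define x⁰ by U x⁰_i = max{|a⁰_i|, |b⁰_i|}, and let γ = 1 − min_{i∈T₀} α_i where α_i = min{|a⁰_i|, |b⁰_i|}/max{|a⁰_i|, |b⁰_i|}. If ‖x*‖₁ ≤ ‖x⁰‖₁, then ‖[a*; b*]‖₁ ≤ 2U‖x⁰‖₁ ≤ ‖[a⁰; b⁰]‖₁ + γ U |T₀|. -/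
open Finset

/-- Chain of ℓ1-norm inequalities (Eq. (28)): if `x*` is defined from `(a*, b*)` by
`U x*_i = max |a*_i| |b*_i|`, the ground truth `(a⁰, b⁰)` is supported on `T₀`, bounded by `U`,
with `x⁰` defined by `U x⁰_i = max |a⁰_i| |b⁰_i|`, and `‖x*‖₁ ≤ ‖x⁰‖₁`, then
`‖[a*; b*]‖₁ ≤ 2U ‖x⁰‖₁ ≤ ‖[a⁰; b⁰]‖₁ + γ U |T₀|`. -/
theorem l1_norm_relation {N : ℕ}
    (as bs a0 b0 xs x0 : Fin N → ℝ) (T0 : Finset (Fin N)) (hT0ne : T0.Nonempty)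
    (U γ : ℝ) (hU : 0 < U)
    (hxs : ∀ i, U * xs i = max |as i| |bs i|)
    (hsupp : ∀ i, i ∉ T0 → a0 i = 0 ∧ b0 i = 0)
    (hT0pos : ∀ i ∈ T0, 0 < max |a0 i| |b0 i|)
    (hbnda : ∀ i, |a0 i| ≤ U) (hbndb : ∀ i, |b0 i| ≤ U)
    (hx0 : ∀ i, U * x0 i = max |a0 i| |b0 i|)
    (hγ : γ = 1 - T0.inf' hT0ne fun i => min |a0 i| |b0 i| / max |a0 i| |b0 i|)
    (hle : ∑ i, |xs i| ≤ ∑ i, |x0 i|) :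
    ∑ i, (|as i| + |bs i|) ≤ 2 * U * (∑ i, |x0 i|) ∧
    2 * U * (∑ i, |x0 i|) ≤ (∑ i, (|a0 i| + |b0 i|)) + γ * U * (T0.card : ℝ) := by
  have key : ∀ x : Fin N → ℝ, ∀ a b : Fin N → ℝ, (∀ i, U * x i = max |a i| |b i|) →
      2 * U * (∑ i, |x i|) = ∑ i, 2 * max |a i| |b i| := by
    intro x a b h
    rw [Finset.mul_sum]
    refine Finset.sum_congr rfl fun i _ => ?_
    have h1 : 0 ≤ U * x i := by
      rw [h i]
      exact le_max_of_le_left (abs_nonneg _)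
    have h2 : 0 ≤ x i := nonneg_of_mul_nonneg_right h1 hU
    rw [abs_of_nonneg h2, ← h i]
    ring
  constructor
  · calc ∑ i, (|as i| + |bs i|) ≤ ∑ i, 2 * max |as i| |bs i| := by
          refine Finset.sum_le_sum fun i _ => ?_
          linarith [le_max_left |as i| |bs i|, le_max_right |as i| |bs i|]
      _ = 2 * U * (∑ i, |xs i|) := (key xs as bs hxs).symm
      _ ≤ _ := mul_le_mul_of_nonneg_left hle (by positivity)
  · have hα : ∀ i ∈ T0, 1 - γ ≤ min |a0 i| |b0 i| / max |a0 i| |b0 i| := by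
      intro i hi
      have := Finset.inf'_le (fun i => min |a0 i| |b0 i| / max |a0 i| |b0 i|) hi
      linarith
    have hγ0 : 0 ≤ γ := by
      obtain ⟨i, hi⟩ := hT0ne
      have h1 := hα i hi
      have h2 : min |a0 i| |b0 i| / max |a0 i| |b0 i| ≤ 1 :=
        (div_le_one (hT0pos i hi)).2 min_le_max
      linarith
    have hc : γ * U * (T0.card : ℝ) = ∑ i, if i ∈ T0 then γ * U else 0 := by
      rw [Finset.sum_ite_mem, Finset.univ_inter, Finset.sum_const, nsmul_eq_mul]
      ring
    rw [key x0 a0 b0 hx0, hc, ← Finset.sum_add_distrib]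
    refine Finset.sum_le_sum fun i _ => ?_
    by_cases hi : i ∈ T0
    · rw [if_pos hi]
      have h1 := (le_div_iff₀ (hT0pos i hi)).1 (hα i hi)
      have h2 : γ * max |a0 i| |b0 i| ≤ γ * U :=
        mul_le_mul_of_nonneg_left (max_le (hbnda i) (hbndb i)) hγ0
      have h3 := min_add_max |a0 i| |b0 i|
      linarith
    · obtain ⟨ha, hb⟩ := hsupp i hi
      simp [ha, hb, hi]
end

section
/- Let h be a real vector indexed by a finite set, let T₀ be an index subset, and let T₁, …, T_K be a partition of the complement T₀^C into blocks each of cardinality at most M (M a positive integer), ordered so that each component in T_{j+1} is bounded by the average of the components of T_j: |h_t| ≤ ‖h_{T_j}‖₁ / M for all t ∈ T_{j+1} and all 1 ≤ j ≤ K−1. Then Σ_{j=2}^{K} ‖h_{T_j}‖₂ ≤ ‖h_{T₀^C}‖₁ / √M. -/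
open Finset

/-- If `T₁, …, T_K` is a partition of `T₀ᶜ` into blocks of cardinality at most `M`, ordered so
that each component of `h` on `T_{j+1}` is bounded by the average of the components of `h` on
`T_j`, then `Σ_{j=2}^{K} ‖h_{T_j}‖₂ ≤ ‖h_{T₀ᶜ}‖₁ / √M`. -/
theorem sum_block_l2_le {ι : Type*} [Fintype ι] [DecidableEq ι] (h : ι → ℝ)
    (T0 : Finset ι) (M K : ℕ) (hM : 0 < M) (T : ℕ → Finset ι)
    (hpart : T0ᶜ = (Finset.Icc 1 K).biUnion T)
    (hdisj : (↑(Finset.Icc 1 K) : Set ℕ).PairwiseDisjoint T)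
    (hcard : ∀ j ∈ Finset.Icc 1 K, (T j).card ≤ M)
    (horder : ∀ j, 1 ≤ j → j + 1 ≤ K →
      ∀ t ∈ T (j + 1), |h t| ≤ (∑ s ∈ T j, |h s|) / (M : ℝ)) :
    ∑ j ∈ Finset.Icc 2 K, Real.sqrt (∑ t ∈ T j, h t ^ 2) ≤
      (∑ t ∈ T0ᶜ, |h t|) / Real.sqrt (M : ℝ) := by
  have hM' : (0 : ℝ) < M := by exact_mod_cast hM
  have hsM : 0 < Real.sqrt (M : ℝ) := Real.sqrt_pos.mpr hM'
  rw [hpart, Finset.sum_biUnion hdisj, Finset.sum_div]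
  have key : ∀ j ∈ Finset.Icc 2 K, Real.sqrt (∑ t ∈ T j, h t ^ 2) ≤
      (∑ s ∈ T (j - 1), |h s|) / Real.sqrt (M : ℝ) := by
    intro j hj
    rw [Finset.mem_Icc] at hj
    obtain ⟨i, rfl⟩ : ∃ i, j = i + 1 := ⟨j - 1, by omega⟩
    rw [Nat.add_sub_cancel]
    have ho := horder i (by omega) hj.2
    have hc := hcard (i + 1) (Finset.mem_Icc.mpr ⟨by omega, hj.2⟩)
    set A := ∑ s ∈ T i, |h s| with hA
    have hA0 : 0 ≤ A := Finset.sum_nonneg fun _ _ => abs_nonneg _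
    apply Real.sqrt_le_iff.mpr
    refine ⟨by positivity, ?_⟩
    rw [div_pow, Real.sq_sqrt hM'.le]
    calc ∑ t ∈ T (i + 1), h t ^ 2 ≤ ∑ t ∈ T (i + 1), (A / M) ^ 2 := by
          apply Finset.sum_le_sum
          intro t ht
          rw [← sq_abs]
          exact pow_le_pow_left₀ (abs_nonneg _) (ho t ht) 2
      _ = (T (i + 1)).card * (A / M) ^ 2 := by rw [Finset.sum_const, nsmul_eq_mul]
      _ ≤ M * (A / M) ^ 2 := by
          apply mul_le_mul_of_nonneg_right _ (sq_nonneg _)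
          exact_mod_cast hc
      _ = A ^ 2 / M := by field_simp
  refine (Finset.sum_le_sum key).trans ?_
  have hinj : Set.InjOn (fun j : ℕ => j - 1) (↑(Finset.Icc 2 K) : Set ℕ) := by
    intro a ha b hb hab
    simp only [Finset.coe_Icc, Set.mem_Icc] at ha hb hab
    omega
  rw [← Finset.sum_image (f := fun i => (∑ s ∈ T i, |h s|) / Real.sqrt (M : ℝ)) hinj]
  apply Finset.sum_le_sum_of_subset_of_nonneg
  · intro i hi
    simp only [Finset.mem_image, Finset.mem_Icc] at hi ⊢
    obtain ⟨a, ha, rfl⟩ := hi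
    omega
  · intro i _ _
    exact div_nonneg (Finset.sum_nonneg fun _ _ => abs_nonneg _) hsM.le
end

section
/- Let A ∈ ℝ^{m×n} satisfy the restricted isometry property with constants δ_M (for sets of size ≤ M) and δ_{M+|T₀|} (for sets of size ≤ M + |T₀|). Let h ∈ ℝ^n, let T₀ ⊆ {1,…,n} and let T₁, …, T_K be a partition of T₀^C into blocks of cardinality at most M, and set T₀₁ = T₀ ∪ T₁. Then ‖Ah‖₂ ≥ √(1 − δ_{M+|T₀|}) ‖h_{T₀₁}‖₂ − √(1 + δ_M) Σ_{j=2}^{K} ‖h_{T_j}‖₂ ≥ √(1 − δ_{M+|T₀|}) ‖h_{T₀}‖₂ − √(1 + δ_M) Σ_{j=2}^{K} ‖h_{T_j}‖₂. -/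
open Finset

lemma l2norm_eq_norm {ι : Type*} [Fintype ι] (v : ι → ℝ) :
    l2norm v = ‖WithLp.toLp 2 v‖ := by
  simp [l2norm, EuclideanSpace.norm_eq]

lemma l2norm_add_le {ι : Type*} [Fintype ι] (v w : ι → ℝ) :
    l2norm (v + w) ≤ l2norm v + l2norm w := by
  simp only [l2norm_eq_norm, WithLp.toLp_add]
  exact norm_add_le _ _

lemma l2norm_neg {ι : Type*} [Fintype ι] (v : ι → ℝ) :
    l2norm (-v) = l2norm v := by
  simp [l2norm]

lemma l2norm_sum_le {ι : Type*} [Fintype ι] (s : Finset ℕ) (v : ℕ → ι → ℝ) :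
    l2norm (∑ j ∈ s, v j) ≤ ∑ j ∈ s, l2norm (v j) := by
  simp only [l2norm_eq_norm, WithLp.toLp_sum]
  exact norm_sum_le _ _

/-- Restriction of a vector to an index set. -/
noncomputable def restr {n : ℕ} (h : Fin n → ℝ) (S : Finset (Fin n)) : Fin n → ℝ :=
  fun j => if j ∈ S then h j else 0

lemma restr_sq {n : ℕ} (h : Fin n → ℝ) (S : Finset (Fin n)) :
    ∑ j, restr h S j ^ 2 = ∑ j ∈ S, h j ^ 2 := by
  simp [restr, ite_pow]

lemma restr_upper {m n : ℕ} {A : Matrix (Fin m) (Fin n) ℝ} {M : ℕ} {δ : ℝ}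
    (hR : RIPBound A M δ) (h : Fin n → ℝ) (S : Finset (Fin n)) (hS : S.card ≤ M) :
    l2norm (A.mulVec (restr h S)) ≤ Real.sqrt (1 + δ) * Real.sqrt (∑ t ∈ S, h t ^ 2) := by
  rw [← Real.sqrt_mul' _ (Finset.sum_nonneg fun i _ => sq_nonneg (h i)), ← restr_sq]
  exact Real.sqrt_le_sqrt (hR S _ hS (fun j hj => by simp [restr, hj])).2

lemma restr_lower {m n : ℕ} {A : Matrix (Fin m) (Fin n) ℝ} {M : ℕ} {δ : ℝ}
    (hR : RIPBound A M δ) (h : Fin n → ℝ) (S : Finset (Fin n)) (hS : S.card ≤ M) :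
    Real.sqrt (1 - δ) * Real.sqrt (∑ t ∈ S, h t ^ 2) ≤ l2norm (A.mulVec (restr h S)) := by
  rw [← Real.sqrt_mul' _ (Finset.sum_nonneg fun i _ => sq_nonneg (h i)), ← restr_sq]
  exact Real.sqrt_le_sqrt (hR S _ hS (fun j hj => by simp [restr, hj])).1

/-- Restricted-isometry lower bound on `‖Ah‖₂` (Eq. (32)): if `A` satisfies the RIP with
constants `δ_M` (level `M`) and `δ'` (level `M + |T₀|`), and `T₁, …, T_K` is a partition of
`T₀ᶜ` into blocks of cardinality at most `M`, with `T₀₁ = T₀ ∪ T₁`, then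
`‖Ah‖₂ ≥ √(1 − δ') ‖h_{T₀₁}‖₂ − √(1 + δ_M) Σ_{j=2}^{K} ‖h_{T_j}‖₂
       ≥ √(1 − δ') ‖h_{T₀}‖₂ − √(1 + δ_M) Σ_{j=2}^{K} ‖h_{T_j}‖₂`. -/
theorem rip_lower_bound_on_Ah {m n : ℕ} (A : Matrix (Fin m) (Fin n) ℝ)
    (T0 : Finset (Fin n)) (M K : ℕ) (hM : 0 < M) (hK : 1 ≤ K) (δM δ' : ℝ)
    (hRIP1 : RIPBound A M δM) (hRIP2 : RIPBound A (M + T0.card) δ')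
    (h : Fin n → ℝ) (T : ℕ → Finset (Fin n))
    (hpart : T0ᶜ = (Finset.Icc 1 K).biUnion T)
    (hdisj : (↑(Finset.Icc 1 K) : Set ℕ).PairwiseDisjoint T)
    (hcard : ∀ j ∈ Finset.Icc 1 K, (T j).card ≤ M) :
    Real.sqrt (1 - δ') * Real.sqrt (∑ t ∈ T0 ∪ T 1, h t ^ 2) -
        Real.sqrt (1 + δM) * ∑ j ∈ Finset.Icc 2 K, Real.sqrt (∑ t ∈ T j, h t ^ 2) ≤
      l2norm (A.mulVec h) ∧
    Real.sqrt (1 - δ') * Real.sqrt (∑ t ∈ T0, h t ^ 2) -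
        Real.sqrt (1 + δM) * ∑ j ∈ Finset.Icc 2 K, Real.sqrt (∑ t ∈ T j, h t ^ 2) ≤
      Real.sqrt (1 - δ') * Real.sqrt (∑ t ∈ T0 ∪ T 1, h t ^ 2) -
        Real.sqrt (1 + δM) * ∑ j ∈ Finset.Icc 2 K, Real.sqrt (∑ t ∈ T j, h t ^ 2) := by
  constructor
  · have hdec : h = restr h (T0 ∪ T 1) + ∑ j ∈ Finset.Icc 2 K, restr h (T j) := by
      funext x
      simp only [Pi.add_apply, Finset.sum_apply]
      by_cases hx : x ∈ T0 ∪ T 1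
      · have hz : ∑ j ∈ Finset.Icc 2 K, restr h (T j) x = 0 := by
          refine Finset.sum_eq_zero fun j hj => ?_
          have hj' := Finset.mem_Icc.1 hj
          have : x ∉ T j := by
            intro hxj
            rcases Finset.mem_union.1 hx with h0 | h1
            · have : x ∈ T0ᶜ := by
                rw [hpart]
                exact Finset.mem_biUnion.2 ⟨j, Finset.mem_Icc.2 ⟨by omega, hj'.2⟩, hxj⟩
              exact (Finset.mem_compl.1 this) h0
            · have hd := hdisj (x := 1) (by simp [hK]) (y := j)
                (by simp only [Finset.coe_Icc, Set.mem_Icc]; omega) (by omega)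
              exact Finset.disjoint_left.1 hd h1 hxj
          simp [restr, this]
        rw [hz]
        simp [restr, hx]
      · have hx' := hx
        rw [Finset.mem_union, not_or] at hx'
        have hc : x ∈ T0ᶜ := Finset.mem_compl.2 hx'.1
        rw [hpart] at hc
        obtain ⟨i, hi, hxi⟩ := Finset.mem_biUnion.1 hc
        have hi' := Finset.mem_Icc.1 hi
        have hi1 : i ≠ 1 := by
          rintro rfl
          exact hx'.2 hxi
        rw [Finset.sum_eq_single_of_mem i (Finset.mem_Icc.2 ⟨by omega, hi'.2⟩)]
        · simp only [restr, if_neg hx, if_pos hxi, zero_add]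
        · intro j hj hji
          have hj' := Finset.mem_Icc.1 hj
          have hd := hdisj (x := i) (Finset.mem_coe.2 hi) (y := j)
            (by simp only [Finset.coe_Icc, Set.mem_Icc]; omega) (Ne.symm hji)
          have : x ∉ T j := fun hxj => Finset.disjoint_left.1 hd hxi hxj
          simp [restr, this]
    have hA : A.mulVec (restr h (T0 ∪ T 1)) =
        A.mulVec h + -(∑ j ∈ Finset.Icc 2 K, A.mulVec (restr h (T j))) := by
      conv_rhs => rw [hdec]
      rw [← hdec, ← Matrix.mulVec_sum]
      conv_rhs => enter [1]; rw [hdec]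
      rw [Matrix.mulVec_add]
      abel
    have hlow := restr_lower hRIP2 h (T0 ∪ T 1) (by
      have h1 := hcard 1 (by simp [hK])
      have h2 := Finset.card_union_le T0 (T 1)
      omega)
    have htri := l2norm_add_le (A.mulVec h) (-(∑ j ∈ Finset.Icc 2 K, A.mulVec (restr h (T j))))
    rw [← hA, l2norm_neg] at htri
    have hs := l2norm_sum_le (Finset.Icc 2 K) (fun j => A.mulVec (restr h (T j)))
    have hu : ∑ j ∈ Finset.Icc 2 K, l2norm (A.mulVec (restr h (T j))) ≤
        Real.sqrt (1 + δM) * ∑ j ∈ Finset.Icc 2 K, Real.sqrt (∑ t ∈ T j, h t ^ 2) := by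
      rw [Finset.mul_sum]
      refine Finset.sum_le_sum fun j hj => restr_upper hRIP1 h _ (hcard j ?_)
      have hj' := Finset.mem_Icc.1 hj
      exact Finset.mem_Icc.2 ⟨by omega, hj'.2⟩
    linarith
  · refine sub_le_sub_right (mul_le_mul_of_nonneg_left (Real.sqrt_le_sqrt ?_)
      (Real.sqrt_nonneg _)) _
    exact Finset.sum_le_sum_of_subset_of_nonneg Finset.subset_union_left
      fun i _ _ => sq_nonneg (h i)
end
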